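/- Let A = (A₁, A₂) be a pure commuting 2-contraction on H with D_{A*} injective, let λ = (λ₁,λ₂) ∈ 𝔻², λ ≠ 0, and assume the pair (B₁(λ),B₂(λ)) is also pure. Let (z₁,z₂) ∈ 𝔻². Then Φ_λ(z₁,z₂) ∈ σ_T^{(1)}(B₁(λ),B₂(λ)) if and only if there exists y ≠ 0 in H such that θ_A(z₁,z₂)(D_A((1_{H⊕H} − Λ*A)⁻¹(D_Λ(y,0)))) = 0 and θ_A(z₁,z₂)(D_A((1_{H⊕H} − Λ*A)⁻¹(D_Λ(0,y)))) = 0. -/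

import Mathlib

open ContinuousLinearMap Filter

/-!
The map `Φ_Λ` and the characteristic function `θ_A` make sense with a row operator `Z` in the place
of the point `z`, and `Φ_λ(z)` is then `Φ_Λ(Z)` for the scalar rows `Λ`, `Z` of `λ`, `z`. Two
factorizations hold for rows,

* `Φ_Λ(A) - Φ_Λ(Z) = D_{Λ*} (1 - ZΛ*)⁻¹ (Z - A) (1 - Λ*A)⁻¹ D_Λ`,
* `θ_A(Z) D_A = D_{A*} (1 - ZA*)⁻¹ (Z - A)`,

and the operators to the left of `Z - A` are injective. So `Φ_Λ(A) v = Φ_Λ(Z) v` if and only if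
`θ_A(Z) D_A` vanishes at `(1 - Λ*A)⁻¹ D_Λ v`; the eigenvector equations are the cases `v = (x, 0)`
and `v = (0, x)`, with the same vector `x` on both sides.
-/

section OneSubComp

open scoped Ring

variable {R M N : Type*} [Ring R]
  [TopologicalSpace M] [AddCommGroup M] [IsTopologicalAddGroup M] [Module R M]
  [TopologicalSpace N] [AddCommGroup N] [IsTopologicalAddGroup N] [Module R N]

lemma inverse_eq_of_mul_eq_one {M₀ : Type*} [MonoidWithZero M₀] {a b : M₀} (hba : b * a = 1)
    (hab : a * b = 1) : a⁻¹ʳ = b :=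
  Ring.inverse_unit ⟨a, b, hab, hba⟩

lemma injective_inverse_of_isUnit {T : M →L[R] M} (hT : IsUnit T) :
    Function.Injective (T⁻¹ʳ : M →L[R] M) :=
  Function.LeftInverse.injective (g := T) fun x =>
    DFunLike.congr_fun (Ring.mul_inverse_cancel T hT) x

lemma isUnit_one_sub_comp_comm {A : M →L[R] N} {C : N →L[R] M} (h : IsUnit (1 - A ∘L C)) :
    IsUnit (1 - C ∘L A) := by
  set T := (1 - A ∘L C)⁻¹ʳ
  have hT (x : N) : C (T x) - C (A (C (T x))) = C x := by
    rw [← map_sub]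
    exact congrArg C (DFunLike.congr_fun (Ring.mul_inverse_cancel _ h) x)
  have hT' (x : M) : C (T (A x)) - C (T (A (C (A x)))) = C (A x) := by
    rw [← map_sub, ← map_sub]
    exact congrArg C (DFunLike.congr_fun (Ring.inverse_mul_cancel _ h) (A x))
  refine ⟨⟨1 - C ∘L A, 1 + C ∘L T ∘L A, ?_, ?_⟩, rfl⟩
  · ext x
    simp only [mul_apply_eq_comp, sub_apply, add_apply, comp_apply, one_apply_eq_self, map_add]
    linear_combination (norm := module) hT (A x)
  · ext x
    simp only [mul_apply_eq_comp, sub_apply, add_apply, comp_apply, one_apply_eq_self, map_sub]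
    linear_combination (norm := module) hT' x

lemma inverse_one_sub_comp_comp {A : M →L[R] N} {C : N →L[R] M} (h : IsUnit (1 - A ∘L C)) :
    (1 - A ∘L C)⁻¹ʳ ∘L A = A ∘L (1 - C ∘L A)⁻¹ʳ := by
  have hcomm : A ∘L (1 - C ∘L A) = (1 - A ∘L C) ∘L A := by ext x; simp
  calc (1 - A ∘L C)⁻¹ʳ ∘L A
      = (1 - A ∘L C)⁻¹ʳ ∘L (A ∘L (1 - C ∘L A)) ∘L (1 - C ∘L A)⁻¹ʳ := by
        rw [comp_assoc, ← mul_def (1 - C ∘L A),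
          Ring.mul_inverse_cancel _ (isUnit_one_sub_comp_comm h)]
        rfl
    _ = A ∘L (1 - C ∘L A)⁻¹ʳ := by
        rw [hcomm, comp_assoc, ← comp_assoc _ (1 - A ∘L C), ← mul_def _ (1 - A ∘L C),
          Ring.inverse_mul_cancel _ h]
        rfl

end OneSubComp

section HilbertSpace

open scoped InnerProduct Ring

variable {E F G H : Type*}
  [NormedAddCommGroup E] [InnerProductSpace ℂ E] [NormedAddCommGroup F] [InnerProductSpace ℂ F]
  [NormedAddCommGroup G] [InnerProductSpace ℂ G] [NormedAddCommGroup H] [InnerProductSpace ℂ H]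

/-- The row operator `(x, y) ↦ A₁ x + A₂ y` of a pair of operators, on the Hilbert space direct
sum. -/
noncomputable def rowOperator (A₁ : E →L[ℂ] G) (A₂ : F →L[ℂ] G) : WithLp 2 (E × F) →L[ℂ] G :=
  A₁ ∘L WithLp.fstL 2 ℂ E F + A₂ ∘L WithLp.sndL 2 ℂ E F

/-- The row operator `(x, y) ↦ c₁ x + c₂ y` representing the point `(c₁, c₂)` of `ℂ²`. -/
noncomputable def scalarRow (c₁ c₂ : ℂ) : WithLp 2 (H × H) →L[ℂ] H :=
  rowOperator (c₁ • 1) (c₂ • 1)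

lemma rowOperator_eq_of_forall_apply {A₁ : E →L[ℂ] G} {A₂ : F →L[ℂ] G}
    {A : WithLp 2 (E × F) →L[ℂ] G}
    (hA : ∀ x y, A ((WithLp.equiv 2 (E × F)).symm (x, y)) = A₁ x + A₂ y) : rowOperator A₁ A₂ = A :=
  ContinuousLinearMap.ext fun v => (hA v.fst v.snd).symm

variable [CompleteSpace E] [CompleteSpace F] [CompleteSpace H]

lemma rowOperator_comp_adjoint_rowOperator (C₁ : E →L[ℂ] G) (C₂ : F →L[ℂ] G) (A₁ : E →L[ℂ] H)
    (A₂ : F →L[ℂ] H) : rowOperator C₁ C₂ ∘L (rowOperator A₁ A₂)† = C₁ ∘L A₁† + C₂ ∘L A₂† := by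
  have hadj (h : H) : ((rowOperator A₁ A₂)†) h = WithLp.toLp 2 ((A₁†) h, (A₂†) h) := by
    refine ext_inner_right ℂ fun v => ?_
    rw [adjoint_inner_left]
    simp [rowOperator, adjoint_inner_left, inner_add_right]
  ext h
  rw [comp_apply, hadj]
  simp [rowOperator]

lemma one_sub_mul_adjoint_sub_mul_adjoint (A₁ A₂ : H →L[ℂ] H) :
    1 - A₁ * A₁† - A₂ * A₂† = 1 - ((rowOperator A₁ A₂)†)† ∘L (rowOperator A₁ A₂)† := by
  rw [sub_sub, adjoint_adjoint, rowOperator_comp_adjoint_rowOperator]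
  rfl

lemma one_sub_smul_adjoint_sub_smul_adjoint (A₁ A₂ : H →L[ℂ] H) (z₁ z₂ : ℂ) :
    1 - z₁ • A₁† - z₂ • A₂† = 1 - scalarRow z₁ z₂ ∘L (rowOperator A₁ A₂)† := by
  rw [sub_sub, scalarRow, rowOperator_comp_adjoint_rowOperator]
  rfl

open ComplexConjugate in
lemma scalarRow_comp_adjoint_scalarRow (z₁ z₂ c₁ c₂ : ℂ) :
    scalarRow z₁ z₂ ∘L (scalarRow c₁ c₂)† = (z₁ * conj c₁ + z₂ * conj c₂) • (1 : H →L[ℂ] H) := by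
  rw [scalarRow, scalarRow, rowOperator_comp_adjoint_rowOperator]
  ext x
  simp [← star_eq_adjoint, smul_smul, add_smul, mul_comm]

/-- The defect operator `D_A = (1 - A*A)^{1/2}` of a contraction `A`. It is `0`, the junk value of
the square root, when `A` is not a contraction. -/
noncomputable def defectOperator (A : E →L[ℂ] H) : E →L[ℂ] E :=
  CFC.sqrt (1 - A† ∘L A)

/-- The characteristic function `θ_A(Z) = -A + D_{A*} (1 - ZA*)⁻¹ Z D_A` of a contraction `A`, with
an operator `Z` as argument; `θ_A(z)` is its value at the scalar row of `z`. The inverse is `0`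
where it does not exist. -/
noncomputable def characteristicFunction (A Z : E →L[ℂ] H) : E →L[ℂ] H :=
  -A + defectOperator (A†) ∘L (1 - Z ∘L A†)⁻¹ʳ ∘L Z ∘L defectOperator A

/-- The involution `Φ_Λ(A) = Λ - D_{Λ*} (1 - AΛ*)⁻¹ A D_Λ` of the unit ball of operators exchanging
`0` and `Λ`. The inverse is `0` where it does not exist. -/
noncomputable def ballInvolution (L A : E →L[ℂ] H) : E →L[ℂ] H :=
  L - defectOperator (L†) ∘L (1 - A ∘L L†)⁻¹ʳ ∘L A ∘L defectOperator L

lemma adjoint_comp_self_le_one_iff {A : E →L[ℂ] H} : A† ∘L A ≤ 1 ↔ ‖A‖ ≤ 1 := by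
  rw [← CStarAlgebra.norm_le_one_iff_of_nonneg _
    ((nonneg_iff_isPositive _).2 (isPositive_adjoint_comp_self A)), norm_adjoint_comp_self,
    ← abs_le_one_iff_mul_self_le_one, abs_norm]

lemma defectOperator_nonneg (A : E →L[ℂ] H) : 0 ≤ defectOperator A :=
  CFC.sqrt_nonneg _

lemma defectOperator_mul_self {A : E →L[ℂ] H} (hA : ‖A‖ ≤ 1) :
    defectOperator A * defectOperator A = 1 - A† ∘L A :=
  CFC.sqrt_mul_sqrt_self _ (sub_nonneg.2 (adjoint_comp_self_le_one_iff.2 hA))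

lemma defectOperator_eq_of_mul_self {A : E →L[ℂ] H} {D : E →L[ℂ] E} (hD : 0 ≤ D)
    (hD2 : D * D = 1 - A† ∘L A) : defectOperator A = D :=
  CFC.sqrt_unique hD2 hD

lemma norm_le_one_of_mul_self_eq {A : E →L[ℂ] H} {D : E →L[ℂ] E} (hD : 0 ≤ D)
    (hD2 : D * D = 1 - A† ∘L A) : ‖A‖ ≤ 1 :=
  adjoint_comp_self_le_one_iff.1 <| sub_nonneg.1 <|
    hD2 ▸ (IsSelfAdjoint.of_nonneg hD).mul_self_nonneg

-- `a K K* = -K b K*` is self-adjoint, so `a` and `K K*` commute and the left side is nonnegative,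
-- while the right side is nonpositive.
lemma comp_self_comp_adjoint_eq_zero {a : H →L[ℂ] H} {b : E →L[ℂ] E} {K : E →L[ℂ] H} (ha : 0 ≤ a)
    (hb : 0 ≤ b) (hK : a ∘L K + K ∘L b = 0) : a * (K ∘L K†) = 0 := by
  have hKK : 0 ≤ K ∘L K† := (nonneg_iff_isPositive _).2 (isPositive_self_comp_adjoint K)
  have hKbK : 0 ≤ K ∘L b ∘L K† :=
    (nonneg_iff_isPositive _).2 (((nonneg_iff_isPositive b).1 hb).conj_adjoint K)
  have hneg : a * (K ∘L K†) = -(K ∘L b ∘L K†) := by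
    ext x
    simpa using eq_neg_of_add_eq_zero_left (DFunLike.congr_fun hK ((K†) x))
  have hcomm : Commute a (K ∘L K†) :=
    ((IsSelfAdjoint.of_nonneg ha).commute_iff (IsSelfAdjoint.of_nonneg hKK)).2
      (hneg ▸ (IsSelfAdjoint.of_nonneg hKbK).neg)
  exact le_antisymm (hneg ▸ neg_nonpos.2 hKbK) (hcomm.mul_nonneg ha hKK)

lemma comp_eq_zero_of_comp_add_comp_eq_zero {a : H →L[ℂ] H} {b : E →L[ℂ] E} {K : E →L[ℂ] H}
    (ha : 0 ≤ a) (hb : 0 ≤ b) (hK : a ∘L K + K ∘L b = 0) : a ∘L K = 0 := by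
  have haKK := comp_self_comp_adjoint_eq_zero ha hb hK
  have hadj : ((a ∘L K)†)† ∘L (a ∘L K)† = 0 := by
    rw [adjoint_adjoint, adjoint_comp]
    change a * (K ∘L K†) * a† = 0
    rw [haKK, zero_mul]
  exact (LinearIsometryEquiv.map_eq_zero_iff _).1 (adjoint_comp_self_eq_zero_iff.1 hadj)

-- With `K = D_{A*} A - A D_A` one has `D_{A*} K + K D_A = D_{A*}² A - A D_A² = 0`, so `D_{A*} K`
-- and `K D_A` both vanish, and then `K K* K = K A* D_{A*} K - K D_A A* K = 0`.
lemma defectOperator_adjoint_comp {A : E →L[ℂ] H} (hA : ‖A‖ ≤ 1) :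
    defectOperator (A†) ∘L A = A ∘L defectOperator A := by
  set a := defectOperator (A†)
  set b := defectOperator A
  have ha : 0 ≤ a := defectOperator_nonneg _
  have hb : 0 ≤ b := defectOperator_nonneg _
  set K := a ∘L A - A ∘L b with hK_def
  have ha2 : a * a = 1 - A ∘L A† := by
    simpa only [adjoint_adjoint] using
      defectOperator_mul_self (A := A†) ((LinearIsometryEquiv.norm_map _ A).trans_le hA)
  have hb2 : b * b = 1 - A† ∘L A := defectOperator_mul_self hA
  have hsum : a ∘L K + K ∘L b = 0 := by
    calc a ∘L K + K ∘L b = (a * a) ∘L A - A ∘L (b * b) := by ext x; simp [hK_def]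
      _ = 0 := by rw [ha2, hb2]; ext x; simp
  have haK : a ∘L K = 0 := comp_eq_zero_of_comp_add_comp_eq_zero ha hb hsum
  have hKb : K ∘L b = 0 := by rwa [haK, zero_add] at hsum
  have hKadj : K† = A† ∘L a - b ∘L A† := by
    rw [hK_def, map_sub, adjoint_comp, adjoint_comp, (IsSelfAdjoint.of_nonneg ha).adjoint_eq,
      (IsSelfAdjoint.of_nonneg hb).adjoint_eq]
  have hKKK : (K† ∘L K)† ∘L (K† ∘L K) = 0 := by
    calc (K† ∘L K)† ∘L (K† ∘L K) = K† ∘L (K ∘L K† ∘L K) := by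
          rw [adjoint_comp, adjoint_adjoint]; rfl
      _ = K† ∘L (K ∘L A† ∘L (a ∘L K) - (K ∘L b) ∘L A† ∘L K) := by
          rw [hKadj]; ext x; simp
      _ = 0 := by rw [haK, hKb]; simp
  exact sub_eq_zero.1 (adjoint_comp_self_eq_zero_iff.1 (adjoint_comp_self_eq_zero_iff.1 hKKK))

theorem characteristicFunction_comp_defectOperator {A Z : E →L[ℂ] H} (hA : ‖A‖ ≤ 1)
    (hZA : IsUnit (1 - Z ∘L A†)) :
    characteristicFunction A Z ∘L defectOperator A =
      defectOperator (A†) ∘L (1 - Z ∘L A†)⁻¹ʳ ∘L (Z - A) := by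
  set R := (1 - Z ∘L A†)⁻¹ʳ
  have hR : R ∘L (1 - Z ∘L A†) = 1 := Ring.inverse_mul_cancel _ hZA
  calc characteristicFunction A Z ∘L defectOperator A
      = -(A ∘L defectOperator A)
          + defectOperator (A†) ∘L R ∘L Z ∘L (defectOperator A * defectOperator A) := by
        ext x; simp [characteristicFunction, R]
    _ = defectOperator (A†) ∘L (R ∘L Z ∘L (1 - A† ∘L A) - 1 ∘L A) := by
        rw [defectOperator_mul_self hA, ← defectOperator_adjoint_comp hA]
        ext x
        simp only [comp_sub, add_apply, neg_apply, comp_apply, sub_apply, one_apply_eq_self]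
        abel
    _ = defectOperator (A†) ∘L R ∘L (Z - A) := by rw [← hR]; ext x; simp

theorem ballInvolution_sub_ballInvolution {L A Z : E →L[ℂ] H} (hAL : IsUnit (1 - A ∘L L†))
    (hZL : IsUnit (1 - Z ∘L L†)) :
    ballInvolution L A - ballInvolution L Z =
      defectOperator (L†) ∘L (1 - Z ∘L L†)⁻¹ʳ ∘L (Z - A) ∘L (1 - L† ∘L A)⁻¹ʳ ∘L
        defectOperator L := by
  set S := (1 - L† ∘L A)⁻¹ʳ
  set Q := (1 - Z ∘L L†)⁻¹ʳ
  have hS : (1 - L† ∘L A) ∘L S = 1 := Ring.mul_inverse_cancel _ (isUnit_one_sub_comp_comm hAL)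
  have hQ : Q ∘L (1 - Z ∘L L†) = 1 := Ring.inverse_mul_cancel _ hZL
  have hresolvent : Q ∘L Z - A ∘L S = Q ∘L (Z - A) ∘L S := by
    calc Q ∘L Z - A ∘L S
        = Q ∘L Z ∘L ((1 - L† ∘L A) ∘L S) - (Q ∘L (1 - Z ∘L L†)) ∘L A ∘L S := by
          rw [hS, hQ]; rfl
      _ = Q ∘L (Z - A) ∘L S := by ext x; simp
  calc ballInvolution L A - ballInvolution L Z
      = defectOperator (L†) ∘L (Q ∘L Z - (1 - A ∘L L†)⁻¹ʳ ∘L A) ∘L defectOperator L := by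
        ext x; simp [ballInvolution, Q]
    _ = defectOperator (L†) ∘L Q ∘L (Z - A) ∘L S ∘L defectOperator L := by
        rw [inverse_one_sub_comp_comp hAL, hresolvent]; rfl

theorem ballInvolution_apply_eq_iff {L A Z : E →L[ℂ] H} (hA : ‖A‖ ≤ 1)
    (hDA : Function.Injective (defectOperator (A†)))
    (hDL : Function.Injective (defectOperator (L†))) (hAL : IsUnit (1 - A ∘L L†))
    (hZL : IsUnit (1 - Z ∘L L†)) (hZA : IsUnit (1 - Z ∘L A†)) (v : E) :
    ballInvolution L A v = ballInvolution L Z v ↔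
      characteristicFunction A Z
        (defectOperator A ((1 - L† ∘L A)⁻¹ʳ (defectOperator L v))) = 0 := by
  set u := (1 - L† ∘L A)⁻¹ʳ (defectOperator L v)
  have hΦ : ballInvolution L A v - ballInvolution L Z v =
      defectOperator (L†) ((1 - Z ∘L L†)⁻¹ʳ ((Z - A) u)) :=
    DFunLike.congr_fun (ballInvolution_sub_ballInvolution hAL hZL) v
  have hθ : characteristicFunction A Z (defectOperator A u) =
      defectOperator (A†) ((1 - Z ∘L A†)⁻¹ʳ ((Z - A) u)) :=
    DFunLike.congr_fun (characteristicFunction_comp_defectOperator hA hZA) u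
  rw [← sub_eq_zero, hΦ, hθ, map_eq_zero_iff _ hDL, map_eq_zero_iff _ hDA,
    map_eq_zero_iff _ (injective_inverse_of_isUnit hZL),
    map_eq_zero_iff _ (injective_inverse_of_isUnit hZA)]

section ScalarRow

variable {L : E →L[ℂ] H} {s : ℝ}

lemma defectOperator_adjoint_of_comp_adjoint (hs : 0 ≤ s) (hL : L ∘L L† = (1 - s ^ 2) • 1) :
    defectOperator (L†) = s • 1 := by
  refine defectOperator_eq_of_mul_self (smul_nonneg hs zero_le_one) ?_
  rw [adjoint_adjoint, hL, smul_mul_smul_comm, mul_one]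
  module

lemma norm_le_one_of_comp_adjoint (hL : L ∘L L† = (1 - s ^ 2) • 1) : ‖L‖ ≤ 1 := by
  rw [← LinearIsometryEquiv.norm_map adjoint L, ← adjoint_comp_self_le_one_iff, adjoint_adjoint, hL,
    ← sub_nonneg, sub_smul, one_smul, sub_sub_cancel]
  exact smul_nonneg (sq_nonneg s) zero_le_one

-- The right side is `(1 + s)⁻¹ ((1 - L*L) + s)`, hence nonnegative.
lemma defectOperator_of_comp_adjoint (hs : 0 ≤ s) (hL : L ∘L L† = (1 - s ^ 2) • 1) :
    defectOperator L = 1 - (1 + s)⁻¹ • (L† ∘L L) := by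
  have hs1 : 1 + s ≠ 0 := by positivity
  have hsq : (L† ∘L L) * (L† ∘L L) = (1 - s ^ 2) • (L† ∘L L) := by
    calc (L† ∘L L) * (L† ∘L L) = L† ∘L (L ∘L L†) ∘L L := rfl
      _ = (1 - s ^ 2) • (L† ∘L L) := by rw [hL]; ext x; simp
  refine defectOperator_eq_of_mul_self ?_ ?_
  · have hnonneg : 0 ≤ (1 + s)⁻¹ • ((1 - L† ∘L L) + s • 1) :=
      smul_nonneg (by positivity) <| add_nonneg
        (sub_nonneg.2 (adjoint_comp_self_le_one_iff.2 (norm_le_one_of_comp_adjoint hL)))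
        (smul_nonneg hs zero_le_one)
    convert hnonneg using 1
    match_scalars <;> field_simp
  · simp only [sub_mul, mul_sub, one_mul, mul_one, smul_mul_smul_comm, hsq]
    match_scalars <;> field_simp
    ring

lemma isUnit_one_sub_comp_adjoint {Z : E →L[ℂ] H} {p : ℂ} (hp : p ≠ 1) (hZ : Z ∘L L† = p • 1) :
    IsUnit (1 - Z ∘L L†) := by
  rw [hZ, ← Algebra.algebraMap_eq_smul_one, ← map_one (algebraMap ℂ (H →L[ℂ] H)), ← map_sub]
  exact (IsUnit.mk0 _ (sub_ne_zero.2 hp.symm)).map _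

theorem ballInvolution_of_comp_adjoint {Z : E →L[ℂ] H} {p : ℂ} (hs : 0 ≤ s) (hp : p ≠ 1)
    (hL : L ∘L L† = (1 - s ^ 2) • 1) (hZ : Z ∘L L† = p • 1) :
    ballInvolution L Z = L - ((s : ℂ) / (1 - p)) • (Z - (p / (1 + s)) • L) := by
  have hp' : 1 - p ≠ 0 := sub_ne_zero.2 hp.symm
  have hinv : (1 - Z ∘L L†)⁻¹ʳ = (1 - p)⁻¹ • 1 := by
    rw [show 1 - Z ∘L L† = (1 - p) • 1 by rw [hZ]; module]
    exact inverse_eq_of_mul_eq_one (by simp [hp']) (by simp [hp'])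
  have hZD : Z ∘L defectOperator L = Z - (p / (1 + s)) • L := by
    calc Z ∘L defectOperator L = Z - (1 + s)⁻¹ • (Z ∘L L†) ∘L L := by
          rw [defectOperator_of_comp_adjoint hs hL]; ext x; simp
      _ = Z - (p / (1 + s)) • L := by
          rw [hZ, ← Complex.coe_smul]; ext x; simp [smul_smul, div_eq_inv_mul]
  rw [ballInvolution, hZD, hinv, defectOperator_adjoint_of_comp_adjoint hs hL, ← Complex.coe_smul]
  ext x
  simp only [sub_apply, comp_apply, smul_apply, one_apply_eq_self, smul_smul, div_eq_mul_inv]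

end ScalarRow

open ComplexConjugate in
lemma inner_ne_one_of_mem_ball {z₁ z₂ c₁ c₂ : ℂ} (hz : ‖z₁‖ ^ 2 + ‖z₂‖ ^ 2 < 1)
    (hc : ‖c₁‖ ^ 2 + ‖c₂‖ ^ 2 < 1) : z₁ * conj c₁ + z₂ * conj c₂ ≠ 1 := by
  intro h
  have hle : ‖z₁ * conj c₁ + z₂ * conj c₂‖ ≤ ‖z₁‖ * ‖c₁‖ + ‖z₂‖ * ‖c₂‖ := by
    simpa using norm_add_le (z₁ * conj c₁) (z₂ * conj c₂)
  rw [h, norm_one] at hle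
  linarith [two_mul_le_add_sq ‖z₁‖ ‖c₁‖, two_mul_le_add_sq ‖z₂‖ ‖c₂‖]

lemma scalarRow_comp_adjoint_self {c₁ c₂ : ℂ} {s : ℝ} (hs : ‖c₁‖ ^ 2 + ‖c₂‖ ^ 2 = 1 - s ^ 2) :
    scalarRow c₁ c₂ ∘L (scalarRow c₁ c₂)† = (1 - s ^ 2) • (1 : H →L[ℂ] H) := by
  rw [scalarRow_comp_adjoint_scalarRow, Complex.mul_conj', Complex.mul_conj', ← hs,
    ← Complex.coe_smul]
  push_cast
  rfl

open ComplexConjugate in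
theorem ballInvolution_scalarRow {z₁ z₂ c₁ c₂ : ℂ} {s : ℝ} (hs : 0 ≤ s)
    (hs2 : ‖c₁‖ ^ 2 + ‖c₂‖ ^ 2 = 1 - s ^ 2) (hc : (c₁, c₂) ≠ 0)
    (hip : z₁ * conj c₁ + z₂ * conj c₂ ≠ 1) :
    ballInvolution (scalarRow c₁ c₂) (scalarRow (H := H) z₁ z₂) = scalarRow
      (c₁ - s / (1 - (z₁ * conj c₁ + z₂ * conj c₂)) * (z₁ - (1 - s) *
        ((z₁ * conj c₁ + z₂ * conj c₂) / ((‖c₁‖ ^ 2 + ‖c₂‖ ^ 2 : ℝ) : ℂ)) * c₁))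
      (c₂ - s / (1 - (z₁ * conj c₁ + z₂ * conj c₂)) * (z₂ - (1 - s) *
        ((z₁ * conj c₁ + z₂ * conj c₂) / ((‖c₁‖ ^ 2 + ‖c₂‖ ^ 2 : ℝ) : ℂ)) * c₂)) := by
  set p := z₁ * conj c₁ + z₂ * conj c₂
  have hm : ‖c₁‖ ^ 2 + ‖c₂‖ ^ 2 ≠ 0 := by
    contrapose! hc
    have h := (add_eq_zero_iff_of_nonneg (sq_nonneg ‖c₁‖) (sq_nonneg ‖c₂‖)).1 hc
    exact Prod.ext (by simpa using h.1) (by simpa using h.2)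
  have hcoeff : (1 - (s : ℂ)) * (p / ((‖c₁‖ ^ 2 + ‖c₂‖ ^ 2 : ℝ) : ℂ)) = p / (1 + s) := by
    have h1 : (1 : ℂ) + s ≠ 0 := by exact_mod_cast (by positivity : 1 + s ≠ 0)
    have h2 : (1 : ℂ) - s ^ 2 ≠ 0 := by exact_mod_cast hs2 ▸ hm
    rw [hs2]
    push_cast
    field_simp
    ring
  rw [ballInvolution_of_comp_adjoint hs hip (scalarRow_comp_adjoint_self hs2)
    (scalarRow_comp_adjoint_scalarRow z₁ z₂ c₁ c₂), hcoeff]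
  ext v
  simp only [scalarRow, rowOperator, smul_comp, smul_add, sub_apply, add_apply, smul_apply,
    comp_apply, WithLp.fstL_apply, one_apply_eq_self, WithLp.sndL_apply]
  module

theorem exists_joint_eigenvector_iff {A L Z : WithLp 2 (H × H) →L[ℂ] H} {B₁ B₂ : H →L[ℂ] H}
    {w₁ w₂ : ℂ} (hA : ‖A‖ ≤ 1) (hDA : Function.Injective (defectOperator (A†)))
    (hDL : Function.Injective (defectOperator (L†))) (hAL : IsUnit (1 - A ∘L L†))
    (hZL : IsUnit (1 - Z ∘L L†)) (hZA : IsUnit (1 - Z ∘L A†))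
    (hB : ballInvolution L A = rowOperator B₁ B₂) (hw : ballInvolution L Z = scalarRow w₁ w₂) :
    (∃ x : H, x ≠ 0 ∧ B₁ x - w₁ • x = 0 ∧ B₂ x - w₂ • x = 0) ↔
      ∃ y : H, y ≠ 0 ∧
        characteristicFunction A Z (defectOperator A ((1 - L† ∘L A)⁻¹ʳ
          (defectOperator L (WithLp.toLp 2 (y, 0))))) = 0 ∧
        characteristicFunction A Z (defectOperator A ((1 - L† ∘L A)⁻¹ʳ
          (defectOperator L (WithLp.toLp 2 (0, y))))) = 0 := by
  simp only [← ballInvolution_apply_eq_iff hA hDA hDL hAL hZL hZA, hB, hw]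
  simp [rowOperator, scalarRow, sub_eq_zero]

end HilbertSpace

theorem sigma_one_phi_char_general
    {H : Type*} [NormedAddCommGroup H] [InnerProductSpace ℂ H] [CompleteSpace H]
    {A₁ A₂ Dstar : H →L[ℂ] H} (hDstar_pos : 0 ≤ Dstar)
    (hDstar_sq : Dstar * Dstar = 1 - A₁ * adjoint A₁ - A₂ * adjoint A₂)
    (hDstar_inj : Function.Injective ⇑Dstar)
    {Arow : WithLp 2 (H × H) →L[ℂ] H}
    (hArow : ∀ x y : H, Arow ((WithLp.equiv 2 (H × H)).symm (x, y)) = A₁ x + A₂ y)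
    {DA : WithLp 2 (H × H) →L[ℂ] WithLp 2 (H × H)} (hDA_pos : 0 ≤ DA)
    (hDA_sq : DA * DA = 1 - (adjoint Arow) ∘L Arow)
    {μ₁ μ₂ : ℂ} (hμ : ‖μ₁‖ ^ 2 + ‖μ₂‖ ^ 2 < 1) (hμ0 : (μ₁, μ₂) ≠ ((0 : ℂ), (0 : ℂ)))
    {s : ℝ} (hs : s = Real.sqrt (1 - ‖μ₁‖ ^ 2 - ‖μ₂‖ ^ 2))
    {Lrow : WithLp 2 (H × H) →L[ℂ] H}
    (hLrow : ∀ x y : H, Lrow ((WithLp.equiv 2 (H × H)).symm (x, y)) = μ₁ • x + μ₂ • y)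
    {DL : WithLp 2 (H × H) →L[ℂ] WithLp 2 (H × H)} (hDL_pos : 0 ≤ DL)
    (hDL_sq : DL * DL = 1 - (adjoint Lrow) ∘L Lrow)
    {T₁ : H →L[ℂ] H} (hT₁ : T₁ * (1 - Arow ∘L adjoint Lrow) = 1)
    (hT₁' : (1 - Arow ∘L adjoint Lrow) * T₁ = 1)
    {S₂ : WithLp 2 (H × H) →L[ℂ] WithLp 2 (H × H)}
    (hS₂ : S₂ * (1 - (adjoint Lrow) ∘L Arow) = 1) (hS₂' : (1 - (adjoint Lrow) ∘L Arow) * S₂ = 1)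
    {B₁ B₂ : H →L[ℂ] H}
    (hB : ∀ x y : H, (Lrow - (s : ℂ) • (T₁ ∘L Arow ∘L DL))
      ((WithLp.equiv 2 (H × H)).symm (x, y)) = B₁ x + B₂ y)
    {z₁ z₂ : ℂ} {R : H →L[ℂ] H} (hR₁ : R * (1 - z₁ • adjoint A₁ - z₂ • adjoint A₂) = 1)
    (hR₂ : (1 - z₁ • adjoint A₁ - z₂ • adjoint A₂) * R = 1)
    {Zrow : WithLp 2 (H × H) →L[ℂ] H}
    (hZrow : ∀ x y : H, Zrow ((WithLp.equiv 2 (H × H)).symm (x, y)) = z₁ • x + z₂ • y)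
    {ip : ℂ} (hip : ip = z₁ * (starRingEnd ℂ) μ₁ + z₂ * (starRingEnd ℂ) μ₂) (hip1 : ip ≠ 1)
    {w₁ w₂ : ℂ}
    (hw₁ : w₁ = μ₁ - ((s : ℂ) / (1 - ip)) *
      (z₁ - (1 - (s : ℂ)) * (ip / ((‖μ₁‖ ^ 2 + ‖μ₂‖ ^ 2 : ℝ) : ℂ)) * μ₁))
    (hw₂ : w₂ = μ₂ - ((s : ℂ) / (1 - ip)) *
      (z₂ - (1 - (s : ℂ)) * (ip / ((‖μ₁‖ ^ 2 + ‖μ₂‖ ^ 2 : ℝ) : ℂ)) * μ₂)) :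
    (∃ x : H, x ≠ 0 ∧ B₁ x - w₁ • x = 0 ∧ B₂ x - w₂ • x = 0) ↔
      ∃ y : H, y ≠ 0 ∧
        (-Arow + Dstar ∘L R ∘L Zrow ∘L DA)
          (DA (S₂ (DL ((WithLp.equiv 2 (H × H)).symm (y, 0))))) = 0 ∧
        (-Arow + Dstar ∘L R ∘L Zrow ∘L DA)
          (DA (S₂ (DL ((WithLp.equiv 2 (H × H)).symm (0, y))))) = 0 := by
  obtain ⟨hs0, hs2⟩ : 0 < s ∧ ‖μ₁‖ ^ 2 + ‖μ₂‖ ^ 2 = 1 - s ^ 2 := by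
    rw [hs, Real.sqrt_pos, Real.sq_sqrt (by linarith)]
    constructor <;> linarith
  obtain rfl := rowOperator_eq_of_forall_apply hArow
  obtain rfl : scalarRow μ₁ μ₂ = Lrow := rowOperator_eq_of_forall_apply (by simpa using hLrow)
  obtain rfl : scalarRow z₁ z₂ = Zrow := rowOperator_eq_of_forall_apply (by simpa using hZrow)
  rw [one_sub_smul_adjoint_sub_smul_adjoint] at hR₁ hR₂
  rw [one_sub_mul_adjoint_sub_mul_adjoint] at hDstar_sq
  have hA := norm_le_one_of_mul_self_eq hDA_pos hDA_sq
  have hDLadj :=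
    defectOperator_adjoint_of_comp_adjoint hs0.le (scalarRow_comp_adjoint_self (H := H) hs2)
  obtain rfl := defectOperator_eq_of_mul_self hDstar_pos hDstar_sq
  obtain rfl := defectOperator_eq_of_mul_self hDA_pos hDA_sq
  obtain rfl := defectOperator_eq_of_mul_self hDL_pos hDL_sq
  obtain rfl := inverse_eq_of_mul_eq_one hR₁ hR₂
  obtain rfl := inverse_eq_of_mul_eq_one hT₁ hT₁'
  obtain rfl := inverse_eq_of_mul_eq_one hS₂ hS₂'
  subst hip hw₁ hw₂
  refine exists_joint_eigenvector_iff hA hDstar_inj ?_ ⟨⟨_, _, hT₁', hT₁⟩, rfl⟩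
    (isUnit_one_sub_comp_adjoint hip1 (scalarRow_comp_adjoint_scalarRow ..))
    ⟨⟨_, _, hR₂, hR₁⟩, rfl⟩ ?_ (ballInvolution_scalarRow hs0.le hs2 hμ0 hip1)
  · rw [hDLadj]
    exact smul_right_injective H (r := s) hs0.ne'
  · rw [rowOperator_eq_of_forall_apply hB, ballInvolution, hDLadj, ← Complex.coe_smul]
    rfl

theorem sigma_one_phi_char
    {H : Type*} [NormedAddCommGroup H] [InnerProductSpace ℂ H] [CompleteSpace H]
    (A₁ A₂ : H →L[ℂ] H)
    (hcomm : A₁ * A₂ = A₂ * A₁)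
    (hcontr : A₁ * adjoint A₁ + A₂ * adjoint A₂ ≤ 1)
    (hpure : ∀ x : H, Tendsto (fun n => ((A₁ * adjoint A₁ + A₂ * adjoint A₂) ^ n) x) atTop (nhds 0))
    (Dstar : H →L[ℂ] H) (hDstar_pos : 0 ≤ Dstar)
    (hDstar_sq : Dstar * Dstar = 1 - A₁ * adjoint A₁ - A₂ * adjoint A₂)
    (hDstar_inj : Function.Injective ⇑Dstar)
    (Arow : WithLp 2 (H × H) →L[ℂ] H)
    (hArow : ∀ x y : H, Arow ((WithLp.equiv 2 (H × H)).symm (x, y)) = A₁ x + A₂ y)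
    (DA : WithLp 2 (H × H) →L[ℂ] WithLp 2 (H × H)) (hDA_pos : 0 ≤ DA)
    (hDA_sq : DA * DA = 1 - (adjoint Arow) ∘L Arow)
    (μ₁ μ₂ : ℂ) (hμ : ‖μ₁‖ ^ 2 + ‖μ₂‖ ^ 2 < 1) (hμ0 : (μ₁, μ₂) ≠ ((0 : ℂ), (0 : ℂ)))
    (s : ℝ) (hs : s = Real.sqrt (1 - ‖μ₁‖ ^ 2 - ‖μ₂‖ ^ 2))
    (Lrow : WithLp 2 (H × H) →L[ℂ] H)
    (hLrow : ∀ x y : H, Lrow ((WithLp.equiv 2 (H × H)).symm (x, y)) = μ₁ • x + μ₂ • y)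
    (DL : WithLp 2 (H × H) →L[ℂ] WithLp 2 (H × H)) (hDL_pos : 0 ≤ DL)
    (hDL_sq : DL * DL = 1 - (adjoint Lrow) ∘L Lrow)
    (T₁ : H →L[ℂ] H) (hT₁ : T₁ * (1 - Arow ∘L adjoint Lrow) = 1)
    (hT₁' : (1 - Arow ∘L adjoint Lrow) * T₁ = 1)
    (S₂ : WithLp 2 (H × H) →L[ℂ] WithLp 2 (H × H))
    (hS₂ : S₂ * (1 - (adjoint Lrow) ∘L Arow) = 1) (hS₂' : (1 - (adjoint Lrow) ∘L Arow) * S₂ = 1)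
    (B₁ B₂ : H →L[ℂ] H)
    (hB : ∀ x y : H, (Lrow - (s : ℂ) • (T₁ ∘L Arow ∘L DL)) ((WithLp.equiv 2 (H × H)).symm (x, y)) = B₁ x + B₂ y)
    (hBpure : ∀ x : H, Tendsto (fun n => ((B₁ * adjoint B₁ + B₂ * adjoint B₂) ^ n) x) atTop (nhds 0))
    (z₁ z₂ : ℂ) (hz : ‖z₁‖ ^ 2 + ‖z₂‖ ^ 2 < 1)
    (R : H →L[ℂ] H) (hR₁ : R * (1 - z₁ • adjoint A₁ - z₂ • adjoint A₂) = 1)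
    (hR₂ : (1 - z₁ • adjoint A₁ - z₂ • adjoint A₂) * R = 1)
    (Zrow : WithLp 2 (H × H) →L[ℂ] H)
    (hZrow : ∀ x y : H, Zrow ((WithLp.equiv 2 (H × H)).symm (x, y)) = z₁ • x + z₂ • y)
    (ip : ℂ) (hip : ip = z₁ * (starRingEnd ℂ) μ₁ + z₂ * (starRingEnd ℂ) μ₂)
    (w₁ w₂ : ℂ)
    (hw₁ : w₁ = μ₁ - ((s : ℂ) / (1 - ip)) * (z₁ - (1 - (s : ℂ)) * (ip / ((‖μ₁‖ ^ 2 + ‖μ₂‖ ^ 2 : ℝ) : ℂ)) * μ₁))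
    (hw₂ : w₂ = μ₂ - ((s : ℂ) / (1 - ip)) * (z₂ - (1 - (s : ℂ)) * (ip / ((‖μ₁‖ ^ 2 + ‖μ₂‖ ^ 2 : ℝ) : ℂ)) * μ₂)) :
    (∃ x : H, x ≠ 0 ∧ B₁ x - w₁ • x = 0 ∧ B₂ x - w₂ • x = 0) ↔
      ∃ y : H, y ≠ 0 ∧
        (-Arow + Dstar ∘L R ∘L Zrow ∘L DA) (DA (S₂ (DL ((WithLp.equiv 2 (H × H)).symm (y, 0))))) = 0 ∧
        (-Arow + Dstar ∘L R ∘L Zrow ∘L DA) (DA (S₂ (DL ((WithLp.equiv 2 (H × H)).symm (0, y))))) = 0 := by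
  exact sigma_one_phi_char_general hDstar_pos hDstar_sq hDstar_inj hArow hDA_pos hDA_sq hμ hμ0 hs
    hLrow hDL_pos hDL_sq hT₁ hT₁' hS₂ hS₂' hB hR₁ hR₂ hZrow hip
    (hip ▸ inner_ne_one_of_mem_ball hz hμ) hw₁ hw₂
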